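/- Let Γ = (V, T, s, r) be a network and let t ∈ T be such that o(r(t)) = 0 and there does not exist A ∈ T⁰∖{{v} : v ∈ V} with r(t) ⊆ A. Then the principal ideal I of Q_Γ generated by [tt⁻¹] equals {[αβ⁻¹] : α ∈ RP(Γ), β ∈ RLP(Γ), r(α) = r(β) = r(t)} ∪ {[0]} and is a proper *-ideal of Q_Γ (an ideal closed under the relation L*). -/

import Mathlib

/-!
Write `v` for the set `r(t)`. The hypotheses force `v` to be a singleton that meets no other
element of `T⁰` and is the source of no relation, so nothing but `v` itself can follow `v` in a
nonzero word.

*Description of the ideal.* Consider the products `p * m`, where `p` is a word in `T ∪ T⁰`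
ending in `v` and `m` is the inverse of a linear path ending in `v`. Together with `0` these are
stable under left and right multiplication by every generator (`JSet.mul_left`,
`JSet.mul_right`), and they contain `[tt⁻¹]`, so they contain the principal ideal. Rewriting `p` as a
reduced path turns `p * m` into `[αβ⁻¹]`, and conversely
`αβ⁻¹ = (αt⁻¹)(tt⁻¹)(tβ⁻¹)` when `r(α) = r(β) = v`.

*Properness.* `Q_Γ` acts on pairs (a set of vertices, a list of relations) the way a graph inverse
semigroup acts on paths. In this action any generator whose source or range is `v` can be made to
act as zero, so the whole ideal acts as zero, whereas `s(t)` does not (`source_not_mem`).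

*Closure under `L*`.* If `a = [αβ⁻¹]` lies in the ideal then `a = a * [ββ⁻¹]` because
`β⁻¹β = r(β)` for linear `β`. So `b L* a` gives `b = b * [ββ⁻¹]`, which lies in the ideal since
`[ββ⁻¹]` does. If `a = 0` then `a * 1 = a * 0`, hence `b = b * 0 = 0`.
-/

namespace NetworkSemigroup

/-- A network: vertices `V`, relations `T`, with source and range maps assigning to each
relation disjoint nonempty subsets of `V`. -/
structure Network (V T : Type) where
  s : T → Set V
  r : T → Set V
  s_nonempty : ∀ t, (s t).Nonempty
  r_nonempty : ∀ t, (r t).Nonempty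
  disj : ∀ t, s t ∩ r t = ∅

variable {V T : Type}

/-- Membership in `T⁰`: sources and ranges of relations, together with singletons of vertices. -/
def Network.InT0 (N : Network V T) (A : Set V) : Prop :=
  (∃ t, A = N.s t) ∨ (∃ t, A = N.r t) ∨ (∃ v : V, A = {v})

/-- The set `T⁰` as a type. -/
def Network.T0 (N : Network V T) : Type := { A : Set V // N.InT0 A }

/-- The generating set `X = T ∪ T⁰ ∪ T⁻¹ ∪ {0}` of the presentation of `Q_Γ`. -/
inductive Gen (N : Network V T) : Type
  | pos : T → Gen N
  | neg : T → Gen N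
  | ver : N.T0 → Gen N
  | zero : Gen N

namespace Gen

variable {N : Network V T}

/-- The source (as a set of vertices) of a generator. -/
def srcSet : Gen N → Set V
  | .pos t => N.s t
  | .neg t => N.r t
  | .ver A => A.1
  | .zero => ∅

/-- The range (as a set of vertices) of a generator. -/
def rngSet : Gen N → Set V
  | .pos t => N.r t
  | .neg t => N.s t
  | .ver A => A.1
  | .zero => ∅

/-- The source of a generator, as the corresponding element of `T⁰`. -/
def srcGen : Gen N → Gen N
  | .pos t => .ver ⟨N.s t, Or.inl ⟨t, rfl⟩⟩
  | .neg t => .ver ⟨N.r t, Or.inr (Or.inl ⟨t, rfl⟩)⟩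
  | .ver A => .ver A
  | .zero => .zero

/-- The range of a generator, as the corresponding element of `T⁰`. -/
def rngGen : Gen N → Gen N
  | .pos t => .ver ⟨N.r t, Or.inr (Or.inl ⟨t, rfl⟩)⟩
  | .neg t => .ver ⟨N.s t, Or.inl ⟨t, rfl⟩⟩
  | .ver A => .ver A
  | .zero => .zero

end Gen

open FreeSemigroup

/-- The defining relations (NR1)–(NR6) of the presentation of `Q_Γ`, as a binary relation on
the free semigroup over the generators. -/
inductive NRel (N : Network V T) : FreeSemigroup (Gen N) → FreeSemigroup (Gen N) → Prop
  | nr1l (g : Gen N) (hg : g ≠ .zero) : NRel N (of g.srcGen * of g) (of g)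
  | nr1r (g : Gen N) (hg : g ≠ .zero) : NRel N (of g * of g.rngGen) (of g)
  | nr2 (g₁ g₂ : Gen N) (h₁ : g₁ ≠ .zero) (h₂ : g₂ ≠ .zero)
      (h : g₁.rngSet ∩ g₂.srcSet = ∅) : NRel N (of g₁ * of g₂) (of .zero)
  | nr3 (t₁ t₂ : T) (h : t₁ ≠ t₂) :
      NRel N (of (.neg t₁) * of (.pos t₂)) (of .zero)
  | nr4 (t : T) :
      NRel N (of (.neg t) * of (.pos t)) (of (.ver ⟨N.r t, Or.inr (Or.inl ⟨t, rfl⟩)⟩))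
  | nr5 (t : T) (A : N.T0) (h : A.1 ≠ N.s t) :
      NRel N (of (.neg t) * of (.ver A)) (of .zero)
  | nr6l (x : Gen N) : NRel N (of .zero * of x) (of .zero)
  | nr6r (x : Gen N) : NRel N (of x * of .zero) (of .zero)

/-- The congruence on the free semigroup generated by the defining relations. -/
def QCon (N : Network V T) : Con (FreeSemigroup (Gen N)) := conGen (NRel N)

/-- The semigroup `Q_Γ` given by the presentation `⟨X : R⟩`. -/
abbrev QGamma (N : Network V T) : Type := (QCon N).Quotient

/-- The congruence class of a word. -/
def Qofw {N : Network V T} (w : FreeSemigroup (Gen N)) : QGamma N := (w : (QCon N).Quotient)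

/-- The zero element `[0]` of `Q_Γ`. -/
def Qzero (N : Network V T) : QGamma N := Qofw (of .zero)

/-- Path symbols: elements of `T ∪ T⁰`. -/
def PSym (N : Network V T) : Type := T ⊕ N.T0

namespace PSym

variable {N : Network V T}

/-- The source of a path symbol. -/
def src : PSym N → Set V
  | Sum.inl t => N.s t
  | Sum.inr A => A.1

/-- The range of a path symbol. -/
def rng : PSym N → Set V
  | Sum.inl t => N.r t
  | Sum.inr A => A.1

/-- The generator corresponding to a path symbol. -/
def toGen : PSym N → Gen N
  | Sum.inl t => Gen.pos t
  | Sum.inr A => Gen.ver A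

/-- The generator corresponding to the inverse of a path symbol (`t ↦ t⁻¹`, `A ↦ A`). -/
def toInvGen : PSym N → Gen N
  | Sum.inl t => Gen.neg t
  | Sum.inr A => Gen.ver A

/-- The path symbol is the element of `T⁰` given by the set `B`. -/
def IsVerOf : PSym N → Set V → Prop
  | Sum.inl _, _ => False
  | Sum.inr A, B => A.1 = B

end PSym

/-- `L` is a path: a nonempty sequence of elements of `T ∪ T⁰` in which the range of each
symbol meets the source of the next one. -/
def IsPath (N : Network V T) (L : List (PSym N)) : Prop :=
  L ≠ [] ∧ ∀ (i : ℕ) (a b : PSym N), L[i]? = some a → L[i + 1]? = some b →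
    (a.rng ∩ b.src).Nonempty

/-- `L` is linear: the range of each symbol equals the source of the next one. -/
def IsLinear (N : Network V T) (L : List (PSym N)) : Prop :=
  ∀ (i : ℕ) (a b : PSym N), L[i]? = some a → L[i + 1]? = some b → a.rng = b.src

/-- `L = t₁⋯tₙ` is reduced: `t_{n-1} ≠ s(tₙ)` and, for `1 < i < n`,
`t_{i-1} ≠ s(tᵢ)` and `t_{i+1} ≠ r(tᵢ)`. -/
def IsReducedPath (N : Network V T) (L : List (PSym N)) : Prop :=
  (∀ (i : ℕ) (a b : PSym N), L[i]? = some a → L[i + 1]? = some b →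
      i + 2 = L.length → ¬ a.IsVerOf b.src) ∧
  (∀ (i : ℕ) (a b c : PSym N), L[i]? = some a → L[i + 1]? = some b → L[i + 2]? = some c →
      ¬ a.IsVerOf b.src ∧ ¬ c.IsVerOf b.rng)

/-- `RP(Γ)`: reduced paths. -/
def RP (N : Network V T) : Set (List (PSym N)) :=
  { L | IsPath N L ∧ IsReducedPath N L }

/-- `RLP(Γ)`: reduced linear paths. -/
def RLP (N : Network V T) : Set (List (PSym N)) :=
  { L | IsPath N L ∧ IsLinear N L ∧ IsReducedPath N L }

/-- The source `s(α)` of a path. -/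
def pathSrc (N : Network V T) (L : List (PSym N)) : Set V :=
  match L.head? with
  | some a => a.src
  | none => ∅

/-- The range `r(α)` of a path. -/
def pathRng (N : Network V T) (L : List (PSym N)) : Set V :=
  match L.getLast? with
  | some a => a.rng
  | none => ∅

/-- The path is a single symbol from `T⁰` (an "empty path"). -/
def InT0Path (N : Network V T) (L : List (PSym N)) : Prop :=
  ∃ A : N.T0, L = [Sum.inr A]

/-- The word of the free semigroup determined by a nonempty list of generators
(by convention the empty list is sent to the word `0`). -/
def genWord {N : Network V T} : List (Gen N) → FreeSemigroup (Gen N)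
  | [] => of .zero
  | a :: M => ⟨a, M⟩

/-- The word `α` of a path `α`. -/
def word {N : Network V T} (L : List (PSym N)) : FreeSemigroup (Gen N) :=
  genWord (L.map PSym.toGen)

/-- The word `α⁻¹ = tₙ⁻¹⋯t₁⁻¹` of a path `α = t₁⋯tₙ`. -/
def invWord {N : Network V T} (L : List (PSym N)) : FreeSemigroup (Gen N) :=
  genWord (L.reverse.map PSym.toInvGen)

/-- `αβ⁻¹` is in right normal form: `α ∈ RP(Γ)`, `β ∈ RLP(Γ)` and `r(α) = r(β)`. -/
def IsRNF (N : Network V T) (α β : List (PSym N)) : Prop :=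
  α ∈ RP N ∧ β ∈ RLP N ∧ pathRng N α = pathRng N β

/-- The element `[αβ⁻¹]` of `Q_Γ`. -/
def Qrnf (N : Network V T) (α β : List (PSym N)) : QGamma N :=
  Qofw (word α * invWord β)

/-- The relation `L*`: `a L* b` iff for all `x, y ∈ S¹`, `ax = ay ⇔ bx = by`. -/
def LStar {S : Type*} [Semigroup S] (a b : S) : Prop :=
  ∀ x y : WithOne S,
    (a : WithOne S) * x = (a : WithOne S) * y ↔ (b : WithOne S) * x = (b : WithOne S) * y

/-- The relation `R*`: `a R* b` iff for all `x, y ∈ S¹`, `xa = ya ⇔ xb = yb`. -/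
def RStar {S : Type*} [Semigroup S] (a b : S) : Prop :=
  ∀ x y : WithOne S,
    x * (a : WithOne S) = y * (a : WithOne S) ↔ x * (b : WithOne S) = y * (b : WithOne S)

/-- Green's relation `R`: `a R b` iff `aS¹ = bS¹`. -/
def GreenR {S : Type*} [Semigroup S] (a b : S) : Prop :=
  (∃ x : WithOne S, (a : WithOne S) * x = b) ∧ ∃ y : WithOne S, (b : WithOne S) * y = a

/-- Green's relation `L`: `a L b` iff `S¹a = S¹b`. -/
def GreenL {S : Type*} [Semigroup S] (a b : S) : Prop :=
  (∃ x : WithOne S, x * (a : WithOne S) = b) ∧ ∃ y : WithOne S, y * (b : WithOne S) = a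

/-- Green's relation `H = L ∩ R`. -/
def GreenH {S : Type*} [Semigroup S] (a b : S) : Prop :=
  GreenL a b ∧ GreenR a b


/-- The principal ideal `S¹aS¹` generated by an element `a` of a semigroup. -/
def principalIdeal {S : Type*} [Semigroup S] (a : S) : Set S :=
  { x | x = a ∨ (∃ u, x = a * u) ∨ (∃ u, x = u * a) ∨ ∃ u v, x = u * a * v }

/-! ### Computation rules in the presented semigroup -/

section Rules

variable {N : Network V T}

/-- The class of a generator in `Q_Γ`. -/
def G (g : Gen N) : QGamma N := Qofw (of g)

/-- The element `r(t)` of `T⁰`. -/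
def rV (N : Network V T) (t : T) : N.T0 := ⟨N.r t, Or.inr (Or.inl ⟨t, rfl⟩)⟩

/-- The element `s(t)` of `T⁰`. -/
def sV (N : Network V T) (t : T) : N.T0 := ⟨N.s t, Or.inl ⟨t, rfl⟩⟩

/-- A relation as a path symbol. Being a definition, it has type `PSym N` and not `T ⊕ N.T0`, so that
lemmas about path symbols rewrite under it. -/
def pT (q : T) : PSym N := Sum.inl q

/-- An element of `T⁰` as a path symbol. -/
def pA (A : N.T0) : PSym N := Sum.inr A

lemma PSym.eq_cases (a : PSym N) : (∃ q, a = pT q) ∨ ∃ A, a = pA A := by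
  rcases a with q | A
  exacts [Or.inl ⟨q, rfl⟩, Or.inr ⟨A, rfl⟩]

lemma Qofw_mul (a b : FreeSemigroup (Gen N)) : Qofw (a * b) = Qofw a * Qofw b := rfl

lemma Qofw_eq_of_rel {a b : FreeSemigroup (Gen N)} (h : NRel N a b) : Qofw a = Qofw b :=
  (Con.eq _).2 (ConGen.Rel.of _ _ h)

lemma G_mul_eq_G {a b c : Gen N} (h : NRel N (of a * of b) (of c)) : G a * G b = G c :=
  Qofw_eq_of_rel h

lemma Q_induction {p : QGamma N → Prop} (q : QGamma N) (h : ∀ g, p (G g))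
    (hmul : ∀ g x, p x → p (G g * x)) : p q := by
  induction q using Con.induction_on with
  | H w =>
    induction w using FreeSemigroup.recOnMul with
    | ih1 g => exact h g
    | ih2 g x _ hx => exact hmul g _ hx

lemma zero_mul_Q (q : QGamma N) : Qzero N * q = Qzero N := by
  induction q using Q_induction with
  | h g => exact G_mul_eq_G (.nr6l g)
  | hmul g x hx =>
    rw [← mul_assoc, show Qzero N * G g = Qzero N from G_mul_eq_G (.nr6l g), hx]

lemma mul_zero_Q (q : QGamma N) : q * Qzero N = Qzero N := by
  induction q using Q_induction with
  | h g => exact G_mul_eq_G (.nr6r g)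
  | hmul g x hx =>
    rw [mul_assoc, hx]; exact G_mul_eq_G (.nr6r g)

lemma T0_nonempty (A : N.T0) : A.1.Nonempty := by
  rcases A.2 with ⟨q, h⟩ | ⟨q, h⟩ | ⟨w, h⟩ <;> rw [h]
  exacts [N.s_nonempty q, N.r_nonempty q, Set.singleton_nonempty w]

lemma PSym.isVerOf_iff {a : PSym N} {B : Set V} :
    a.IsVerOf B ↔ ∃ A : N.T0, a = pA A ∧ A.1 = B := by
  rcases a with q | A
  · exact ⟨False.elim, fun ⟨A', h, _⟩ => nomatch (show (Sum.inl q : T ⊕ N.T0) = Sum.inr A' from h)⟩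
  · refine ⟨fun h => ⟨A, rfl, h⟩, fun ⟨A', h, h'⟩ => ?_⟩
    obtain rfl : A = A' := Sum.inr.inj h
    exact h'

lemma PSym.toGen_ne_zero (a : PSym N) : a.toGen ≠ .zero := by
  rcases a with q | A <;> simp [PSym.toGen]

lemma PSym.toInvGen_ne_zero (a : PSym N) : a.toInvGen ≠ .zero := by
  rcases a with q | A <;> simp [PSym.toInvGen]

lemma ver_mul_toGen (A : N.T0) (a : PSym N) (h : A.1 = a.src) :
    G (.ver A) * G a.toGen = G a.toGen := by
  obtain ⟨q, rfl⟩ | ⟨B, rfl⟩ := a.eq_cases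
  · obtain rfl : A = sV N q := Subtype.ext h
    exact G_mul_eq_G (.nr1l (.pos q) (by simp))
  · obtain rfl : A = B := Subtype.ext h
    exact G_mul_eq_G (.nr1l (.ver A) (by simp))

lemma toGen_mul_ver (A : N.T0) (a : PSym N) (h : A.1 = a.rng) :
    G a.toGen * G (.ver A) = G a.toGen := by
  obtain ⟨q, rfl⟩ | ⟨B, rfl⟩ := a.eq_cases
  · obtain rfl : A = rV N q := Subtype.ext h
    exact G_mul_eq_G (.nr1r (.pos q) (by simp))
  · obtain rfl : A = B := Subtype.ext h
    exact G_mul_eq_G (.nr1r (.ver A) (by simp))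

lemma ver_mul_toInvGen (A : N.T0) (a : PSym N) (h : A.1 = a.rng) :
    G (.ver A) * G a.toInvGen = G a.toInvGen := by
  obtain ⟨q, rfl⟩ | ⟨B, rfl⟩ := a.eq_cases
  · obtain rfl : A = rV N q := Subtype.ext h
    exact G_mul_eq_G (.nr1l (.neg q) (by simp))
  · obtain rfl : A = B := Subtype.ext h
    exact G_mul_eq_G (.nr1l (.ver A) (by simp))

lemma neg_mul_sV (q : T) : G (.neg q : Gen N) * G (.ver (sV N q)) = G (.neg q) :=
  G_mul_eq_G (.nr1r (.neg q) (by simp))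

lemma neg_mul_pos (q : T) : G (.neg q : Gen N) * G (.pos q) = G (.ver (rV N q)) :=
  G_mul_eq_G (.nr4 q)

lemma neg_mul_pos_ne {q q' : T} (h : q ≠ q') : G (.neg q : Gen N) * G (.pos q') = Qzero N :=
  G_mul_eq_G (.nr3 q q' h)

lemma neg_mul_ver_ne (q : T) (A : N.T0) (h : A.1 ≠ N.s q) :
    G (.neg q : Gen N) * G (.ver A) = Qzero N :=
  G_mul_eq_G (.nr5 q A h)

/-- Two inverse relations multiply to zero unless they compose linearly. -/
lemma neg_mul_neg_ne (q q' : T) (h : N.r q' ≠ N.s q) :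
    G (.neg q : Gen N) * G (.neg q') = Qzero N := by
  rw [← show G (.ver (rV N q')) * G (.neg q' : Gen N) = G (.neg q') from
    ver_mul_toInvGen (rV N q') (pT q') rfl, ← mul_assoc, neg_mul_ver_ne _ _ h, zero_mul_Q]

lemma toGen_mul_toGen_disj (a b : PSym N) (h : a.rng ∩ b.src = ∅) :
    G a.toGen * G b.toGen = Qzero N := by
  obtain ⟨q, rfl⟩ | ⟨A, rfl⟩ := a.eq_cases <;> obtain ⟨q', rfl⟩ | ⟨B, rfl⟩ := b.eq_cases <;>
  exact G_mul_eq_G (.nr2 _ _ (PSym.toGen_ne_zero _) (PSym.toGen_ne_zero _) h)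

/-- The class of the word of a path. -/
def Qw (L : List (PSym N)) : QGamma N := Qofw (word L)

/-- The class of the inverse word of a path. -/
def Qi (L : List (PSym N)) : QGamma N := Qofw (invWord L)

lemma Qrnf_eq (α β : List (PSym N)) : Qrnf N α β = Qw α * Qi β := rfl

lemma Qw_singleton (a : PSym N) : Qw [a] = G a.toGen := rfl

lemma Qi_singleton (a : PSym N) : Qi [a] = G a.toInvGen := rfl

lemma Qw_cons (a b : PSym N) (L : List (PSym N)) : Qw (a :: b :: L) = G a.toGen * Qw (b :: L) :=
  rfl

lemma genWord_append (M : List (Gen N)) (hM : M ≠ []) (x : Gen N) :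
    genWord (M ++ [x]) = genWord M * of x := by
  cases M with
  | nil => exact absurd rfl hM
  | cons a M => rfl

lemma Qi_cons (a b : PSym N) (L : List (PSym N)) :
    Qi (a :: b :: L) = Qi (b :: L) * G a.toInvGen := by
  unfold Qi invWord G
  rw [List.reverse_cons, List.map_append, List.map_singleton, genWord_append _ (by simp),
    Qofw_mul]

lemma pathRng_singleton (a : PSym N) : pathRng N [a] = a.rng := rfl

lemma pathRng_cons (a b : PSym N) (L : List (PSym N)) :
    pathRng N (a :: b :: L) = pathRng N (b :: L) := by
  simp [pathRng]

lemma Qw_mul_rng (A : N.T0) : ∀ L : List (PSym N), L ≠ [] → pathRng N L = A.1 →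
    Qw L * G (.ver A) = Qw L
  | [], h, _ => absurd rfl h
  | [a], _, h => toGen_mul_ver A a h.symm
  | a :: b :: L, _, h => by
    rw [Qw_cons, mul_assoc, Qw_mul_rng A (b :: L) (by simp) (by rwa [pathRng_cons] at h)]

lemma rng_mul_Qi (A : N.T0) : ∀ L : List (PSym N), L ≠ [] → pathRng N L = A.1 →
    G (.ver A) * Qi L = Qi L
  | [], h, _ => absurd rfl h
  | [a], _, h => ver_mul_toInvGen A a h.symm
  | a :: b :: L, _, h => by
    rw [Qi_cons, ← mul_assoc, rng_mul_Qi A (b :: L) (by simp) (by rwa [pathRng_cons] at h)]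

lemma isLinear_tail {a : PSym N} {L : List (PSym N)} (h : IsLinear N (a :: L)) : IsLinear N L :=
  fun i x y hx hy => h (i + 1) x y (by simpa using hx) (by simpa using hy)

/-- `β⁻¹β = r(β)` for a linear path `β`. -/
lemma Qi_mul_Qw (A : N.T0) : ∀ L : List (PSym N), L ≠ [] → IsLinear N L → pathRng N L = A.1 →
    Qi L * Qw L = G (.ver A)
  | [], h, _, _ => absurd rfl h
  | [a], _, _, h => by
    obtain ⟨q, rfl⟩ | ⟨B, rfl⟩ := a.eq_cases
    · obtain rfl : A = rV N q := Subtype.ext h.symm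
      exact neg_mul_pos q
    · obtain rfl : A = B := Subtype.ext h.symm
      exact ver_mul_toGen A (pA A) rfl
  | a :: b :: L, _, hl, h => by
    have ih := Qi_mul_Qw A (b :: L) (by simp) (isLinear_tail hl) (by rwa [pathRng_cons] at h)
    have hab : a.rng = b.src := hl 0 a b rfl rfl
    -- `a⁻¹a` is the vertex `r(a) = s(b)`, which the remaining path absorbs.
    obtain ⟨B, hB, haa⟩ : ∃ B : N.T0, B.1 = b.src ∧ G a.toInvGen * G a.toGen = G (.ver B) := by
      obtain ⟨q, rfl⟩ | ⟨B, rfl⟩ := a.eq_cases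
      · exact ⟨rV N q, hab, neg_mul_pos q⟩
      · exact ⟨B, hab, ver_mul_toGen B (pA B) rfl⟩
    have hBL : G (.ver B) * Qw (b :: L) = Qw (b :: L) := by
      cases L with
      | nil => exact ver_mul_toGen B b hB
      | cons c L => rw [Qw_cons, ← mul_assoc, ver_mul_toGen B b hB]
    calc Qi (a :: b :: L) * Qw (a :: b :: L)
        = Qi (b :: L) * ((G a.toInvGen * G a.toGen) * Qw (b :: L)) := by
          rw [Qi_cons, Qw_cons]; simp only [mul_assoc]
      _ = G (.ver A) := by rw [haa, hBL, ih]

end Rules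

/-! ### Reduced forms of words ending in `r(t)` -/

section Forms

variable {N : Network V T} {t : T}

/-- Consecutive symbols of a word which admits no rewriting: their product is not zero by (NR2)
and neither symbol is absorbed by the other. This is stronger than what `IsReducedPath` asks at
the two ends of a path. -/
def Step (a b : PSym N) : Prop :=
  (a.rng ∩ b.src).Nonempty ∧ ¬ a.IsVerOf b.src ∧ ¬ b.IsVerOf a.rng

lemma isChain_getElem? {α : Type*} {R : α → α → Prop} {L : List α} (h : L.IsChain R) {i : ℕ}
    {a b : α} (ha : L[i]? = some a) (hb : L[i + 1]? = some b) : R a b := by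
  rw [List.isChain_iff_getElem] at h
  obtain ⟨h1, rfl⟩ := List.getElem?_eq_some_iff.1 hb
  obtain ⟨h0, rfl⟩ := List.getElem?_eq_some_iff.1 ha
  exact h i h1

lemma mem_RP_of_isChain {L : List (PSym N)} (hL : L ≠ []) (h : L.IsChain Step) : L ∈ RP N :=
  ⟨⟨hL, fun _ _ _ ha hb => (isChain_getElem? h ha hb).1⟩,
    fun _ _ _ ha hb _ => (isChain_getElem? h ha hb).2.1,
    fun _ _ _ _ ha hb hc => ⟨(isChain_getElem? h ha hb).2.1, (isChain_getElem? h hb hc).2.2⟩⟩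

/-- The classes of words in `T ∪ T⁰` whose last letter is `r(t)`. -/
inductive PSet (N : Network V T) (t : T) : QGamma N → Prop
  | base : PSet N t (G (.ver (rV N t)))
  | step (a : PSym N) (p : QGamma N) : PSet N t p → PSet N t (G a.toGen * p)

/-- Every such word is zero or equals a reduced path ending in `r(t)`. -/
lemma PSet.exists_path {p : QGamma N} (hp : PSet N t p) :
    p = Qzero N ∨ ∃ L : List (PSym N), L ≠ [] ∧ L.IsChain Step ∧ pathRng N L = N.r t ∧
      p = Qw L := by
  induction hp with
  | base => exact Or.inr ⟨[pA (rV N t)], by simp, by simp, rfl, rfl⟩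
  | step a p _ ih =>
    rcases ih with rfl | ⟨L, hL, hc, hr, rfl⟩
    · exact Or.inl (mul_zero_Q _)
    obtain ⟨b, L, rfl⟩ := List.exists_cons_of_ne_nil hL
    by_cases h0 : (a.rng ∩ b.src).Nonempty
    swap
    · left
      have hab := toGen_mul_toGen_disj a b (Set.not_nonempty_iff_eq_empty.1 h0)
      cases L with
      | nil => exact hab
      | cons c L => rw [Qw_cons, ← mul_assoc, hab, zero_mul_Q]
    right
    by_cases h1 : a.IsVerOf b.src
    · obtain ⟨A, rfl, hA⟩ := PSym.isVerOf_iff.1 h1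
      refine ⟨b :: L, by simp, hc, hr, ?_⟩
      have hab : G (pA A).toGen * G b.toGen = G b.toGen := ver_mul_toGen A b hA
      cases L with
      | nil => exact hab
      | cons c L => rw [Qw_cons, ← mul_assoc, hab]
    by_cases h2 : b.IsVerOf a.rng
    · obtain ⟨B, rfl, hB⟩ := PSym.isVerOf_iff.1 h2
      have hab : G a.toGen * G (pA B).toGen = G a.toGen := toGen_mul_ver B a hB
      cases L with
      | nil => exact ⟨[a], by simp, by simp, hB.symm.trans hr, hab⟩
      | cons c L =>
        rw [List.isChain_cons_cons] at hc
        obtain ⟨⟨hc1, hc2, hc3⟩, hc⟩ := hc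
        refine ⟨a :: c :: L, by simp, List.isChain_cons_cons.2 ⟨⟨?_, ?_, ?_⟩, hc⟩, ?_, ?_⟩
        · exact hB ▸ hc1
        · intro h
          obtain ⟨A, rfl, hA⟩ := PSym.isVerOf_iff.1 h
          exact hc2 (hB.trans hA)
        · exact hB ▸ hc3
        · rw [pathRng_cons] at hr ⊢
          exact hr
        · rw [Qw_cons, Qw_cons, ← mul_assoc, hab]
    · exact ⟨a :: b :: L, by simp, List.isChain_cons_cons.2 ⟨⟨h0, h1, h2⟩, hc⟩,
        by rwa [pathRng_cons], rfl⟩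

/-- `LinTo N t A L`: the list `L` is a linear path from `A` to `r(t)`, which is either `r(t)`
alone or consists of elements of `T` only. -/
inductive LinTo (N : Network V T) (t : T) : Set V → List (PSym N) → Prop
  | base : LinTo N t (N.r t) [pA (rV N t)]
  | one (q : T) : N.r q = N.r t → LinTo N t (N.s q) [pT q]
  | cons (q q' : T) (L : List (PSym N)) : LinTo N t (N.s q') (pT q' :: L) →
      N.r q = N.s q' → LinTo N t (N.s q) (pT q :: pT q' :: L)

lemma LinTo.isChain {A : Set V} {L : List (PSym N)} (h : LinTo N t A L) :
    L.IsChain (fun a b => ∃ q q' : T, a = pT q ∧ b = pT q' ∧ N.r q = N.s q') := by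
  induction h with
  | base => simp
  | one => simp
  | cons q q' L _ hq ih => exact List.isChain_cons_cons.2 ⟨⟨q, q', rfl, rfl, hq⟩, ih⟩

lemma LinTo.ne_nil {A : Set V} {L : List (PSym N)} (h : LinTo N t A L) : L ≠ [] := by
  cases h <;> simp

lemma LinTo.pathRng_eq {A : Set V} {L : List (PSym N)} (h : LinTo N t A L) :
    pathRng N L = N.r t := by
  induction h with
  | base => rfl
  | one q hq => exact hq
  | cons q q' L _ hq ih => rwa [pathRng_cons]

lemma LinTo.mem_RLP {A : Set V} {L : List (PSym N)} (h : LinTo N t A L) : L ∈ RLP N := by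
  have hlin : IsLinear N L := fun i a b ha hb => by
    obtain ⟨q, q', rfl, rfl, hq⟩ := isChain_getElem? h.isChain ha hb
    exact hq
  have hstep : L.IsChain Step := h.isChain.imp (by
    rintro _ _ ⟨q, q', rfl, rfl, hq⟩
    refine ⟨?_, id, id⟩
    change (N.r q ∩ N.s q').Nonempty
    rw [hq, Set.inter_self]
    exact N.s_nonempty q')
  obtain ⟨h1, h2⟩ := mem_RP_of_isChain h.ne_nil hstep
  exact ⟨h1, hlin, h2⟩

lemma LinTo.mul_src {A : Set V} {L : List (PSym N)} (h : LinTo N t A L) (B : N.T0)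
    (hB : B.1 = A) : Qi L * G (.ver B) = Qi L := by
  cases h with
  | base =>
    obtain rfl : B = rV N t := Subtype.ext hB
    exact toGen_mul_ver _ (pA (rV N t)) rfl
  | one q hq =>
    obtain rfl : B = sV N q := Subtype.ext hB
    exact neg_mul_sV q
  | cons q q' L hL hq =>
    obtain rfl : B = sV N q := Subtype.ext hB
    rw [Qi_cons, mul_assoc]
    exact congrArg _ (neg_mul_sV q)

end Forms

/-! ### The ideal generated by `[tt⁻¹]` -/

section Ideal

variable {N : Network V T} {t : T}

/-- The only element of `T⁰` meeting `r(t)` is `r(t)` itself. -/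
def Isolated (N : Network V T) (t : T) : Prop :=
  ∀ A : Set V, N.InT0 A → (N.r t ∩ A).Nonempty → A = N.r t

lemma isolated_of_maximal
    (h₂ : ∀ A : Set V, N.InT0 A → (¬ ∃ v : V, A = {v}) → ¬ N.r t ⊆ A) : Isolated N t := by
  -- Applied to `A = r(t)`, the hypothesis says that `r(t)` is a singleton.
  obtain ⟨v, hv⟩ : ∃ v : V, N.r t = {v} := by
    by_contra h
    exact h₂ (N.r t) (rV N t).2 h subset_rfl
  rintro A hA ⟨x, hx, hxA⟩
  rw [hv] at hx ⊢
  obtain rfl : x = v := hx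
  by_cases h : ∃ w : V, A = {w}
  · obtain ⟨w, rfl⟩ := h
    obtain rfl : x = w := hxA
    rfl
  · exact absurd (by rw [hv]; simpa using hxA) (h₂ A hA h)

/-- The products `p * m` of a word `p` in `T ∪ T⁰` ending in `r(t)` with the inverse `m` of a
linear path to `r(t)`, together with zero. -/
def JSet (N : Network V T) (t : T) : Set (QGamma N) :=
  { z | z = Qzero N ∨ ∃ p, PSet N t p ∧ ∃ A L, LinTo N t A L ∧ z = p * Qi L }

/-- Multiplying by `q⁻¹` cancels a leading `q`, deletes a leading `s(q)`, or gives zero; `q⁻¹r(t) = 0`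
because `r(t)` is not the source of `q`. -/
lemma PSet.neg_mul (h₁ : ∀ q : T, N.s q ≠ N.r t) (q : T) {p : QGamma N} (hp : PSet N t p) :
    G (.neg q) * p = Qzero N ∨ PSet N t (G (.neg q) * p) := by
  induction hp with
  | base => exact Or.inl (neg_mul_ver_ne q _ (h₁ q).symm)
  | step a p hp ih =>
    rw [← mul_assoc]
    obtain ⟨q', rfl⟩ | ⟨A, rfl⟩ := a.eq_cases
    · by_cases h : q = q'
      · subst h
        right
        rw [show G (.neg q) * G (PSym.toGen (pT q)) = G (.ver (rV N q)) from
          neg_mul_pos q]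
        exact PSet.step (pA (rV N q)) p hp
      · left
        rw [show G (.neg q) * G (PSym.toGen (pT q')) = Qzero N from
          neg_mul_pos_ne h, zero_mul_Q]
    · by_cases h : A.1 = N.s q
      · obtain rfl : A = sV N q := Subtype.ext h
        rw [show G (.neg q) * G (PSym.toGen (pA (sV N q))) = G (.neg q) from
          neg_mul_sV q]
        exact ih
      · left
        rw [show G (.neg q) * G (PSym.toGen (pA A)) = Qzero N from
          neg_mul_ver_ne q A h, zero_mul_Q]

lemma PSet.gen_mul (h₁ : ∀ q : T, N.s q ≠ N.r t) (g : Gen N) {p : QGamma N} (hp : PSet N t p) :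
    G g * p = Qzero N ∨ PSet N t (G g * p) := by
  cases g with
  | pos q => exact Or.inr (PSet.step (pT q) p hp)
  | ver A => exact Or.inr (PSet.step (pA A) p hp)
  | neg q => exact hp.neg_mul h₁ q
  | zero => exact Or.inl (zero_mul_Q p)

/-- Multiplying the inverse of a linear path to `r(t)` by a generator prolongs the path, cancels
its first relation, fixes it, or gives zero. -/
lemma LinTo.mul_gen (h₁ : ∀ q : T, N.s q ≠ N.r t) (hs : Isolated N t) (g : Gen N) {A : Set V}
    {L : List (PSym N)} (h : LinTo N t A L) :
    Qi L * G g = Qzero N ∨ ∃ A' L', LinTo N t A' L' ∧ Qi L * G g = Qi L' := by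
  cases g with
  | zero => exact Or.inl (mul_zero_Q _)
  | ver B =>
    by_cases hB : B.1 = A
    · exact Or.inr ⟨A, L, h, h.mul_src B hB⟩
    left
    cases h with
    | base =>
      refine G_mul_eq_G (.nr2 _ _ (PSym.toInvGen_ne_zero _) (by simp) ?_)
      by_contra hne
      exact hB (hs B.1 B.2 (Set.nonempty_iff_ne_empty.2 hne))
    | one q hq => exact neg_mul_ver_ne q B hB
    | cons q q' L hL hq =>
      rw [Qi_cons, mul_assoc, show G (PSym.toInvGen (pT q)) * G (.ver B) = Qzero N
        from neg_mul_ver_ne q B hB, mul_zero_Q]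
  | pos x =>
    cases h with
    | base =>
      left
      refine G_mul_eq_G (.nr2 _ _ (PSym.toInvGen_ne_zero _) (by simp) ?_)
      by_contra hne
      exact h₁ x (hs _ (sV N x).2 (Set.nonempty_iff_ne_empty.2 hne))
    | one q hq =>
      by_cases hx : q = x
      · subst hx
        refine Or.inr ⟨_, _, LinTo.base, ?_⟩
        rw [Qi_singleton, Qi_singleton, show rV N t = rV N q from Subtype.ext hq.symm]
        exact neg_mul_pos q
      · exact Or.inl (neg_mul_pos_ne hx)
    | cons q q' L hL hq =>
      rw [Qi_cons, mul_assoc]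
      by_cases hx : q = x
      · subst hx
        refine Or.inr ⟨_, _, hL, ?_⟩
        rw [show G (PSym.toInvGen (pT q)) * G (.pos q) = G (.ver (rV N q)) from
          neg_mul_pos q]
        exact hL.mul_src _ hq
      · left
        rw [show G (PSym.toInvGen (pT q)) * G (.pos x) = Qzero N from
          neg_mul_pos_ne hx, mul_zero_Q]
  | neg x =>
    cases h with
    | base =>
      by_cases hx : (N.r t ∩ N.r x).Nonempty
      · have hx' : N.r x = N.r t := hs _ (rV N x).2 hx
        exact Or.inr ⟨_, _, LinTo.one x hx', ver_mul_toInvGen (rV N t) (pT x) hx'.symm⟩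
      · left
        exact G_mul_eq_G (.nr2 _ _ (PSym.toInvGen_ne_zero _) (by simp)
          (Set.not_nonempty_iff_eq_empty.1 hx))
    | one q hq =>
      by_cases hx : N.r x = N.s q
      · exact Or.inr ⟨_, _, LinTo.cons x q [] (LinTo.one q hq) hx, (Qi_cons (pT x) (pT q) _).symm⟩
      · exact Or.inl (neg_mul_neg_ne q x hx)
    | cons q q' L hL hq =>
      by_cases hx : N.r x = N.s q
      · exact Or.inr ⟨_, _, LinTo.cons x q _ (LinTo.cons q q' L hL hq) hx, (Qi_cons (pT x) (pT q) _).symm⟩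
      · left
        rw [Qi_cons, mul_assoc, show G (PSym.toInvGen (pT q)) * G (.neg x) = Qzero N
          from neg_mul_neg_ne q x hx, mul_zero_Q]

lemma JSet.gen_mul (h₁ : ∀ q : T, N.s q ≠ N.r t) (g : Gen N) {z : QGamma N}
    (hz : z ∈ JSet N t) : G g * z ∈ JSet N t := by
  rcases hz with rfl | ⟨p, hp, A, L, hL, rfl⟩
  · exact Or.inl (mul_zero_Q _)
  · rw [← mul_assoc]
    rcases hp.gen_mul h₁ g with h | h
    · exact Or.inl (by rw [h, zero_mul_Q])
    · exact Or.inr ⟨_, h, A, L, hL, rfl⟩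

lemma JSet.mul_gen (h₁ : ∀ q : T, N.s q ≠ N.r t) (hs : Isolated N t) (g : Gen N) {z : QGamma N}
    (hz : z ∈ JSet N t) : z * G g ∈ JSet N t := by
  rcases hz with rfl | ⟨p, hp, A, L, hL, rfl⟩
  · exact Or.inl (zero_mul_Q _)
  · rw [mul_assoc]
    rcases hL.mul_gen h₁ hs g with h | ⟨A', L', hL', h⟩
    · exact Or.inl (by rw [h, mul_zero_Q])
    · exact Or.inr ⟨p, hp, A', L', hL', by rw [h]⟩

lemma JSet.mul_left (h₁ : ∀ q : T, N.s q ≠ N.r t) (q : QGamma N) {z : QGamma N}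
    (hz : z ∈ JSet N t) : q * z ∈ JSet N t := by
  induction q using Q_induction with
  | h g => exact JSet.gen_mul h₁ g hz
  | hmul g x hx =>
    rw [mul_assoc]
    exact JSet.gen_mul h₁ g hx

lemma JSet.mul_right (h₁ : ∀ q : T, N.s q ≠ N.r t) (hs : Isolated N t) (q : QGamma N) :
    ∀ {z : QGamma N}, z ∈ JSet N t → z * q ∈ JSet N t := by
  induction q using Q_induction with
  | h g => exact fun hz => JSet.mul_gen h₁ hs g hz
  | hmul g x hx =>
    intro z hz
    rw [← mul_assoc]
    exact hx (JSet.mul_gen h₁ hs g hz)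

lemma tt_mem_JSet (N : Network V T) (t : T) : Qrnf N [pT t] [pT t] ∈ JSet N t := by
  refine Or.inr ⟨_, PSet.step (pT t) _ PSet.base, _, _, LinTo.one t rfl, ?_⟩
  rw [Qrnf_eq, Qw_singleton, toGen_mul_ver (rV N t) (pT t) rfl]

lemma principalIdeal_subset_JSet (h₁ : ∀ q : T, N.s q ≠ N.r t) (hs : Isolated N t) :
    principalIdeal (Qrnf N [pT t] [pT t]) ⊆ JSet N t := by
  have h := tt_mem_JSet N t
  rintro z (rfl | ⟨u, rfl⟩ | ⟨u, rfl⟩ | ⟨u, w, rfl⟩)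
  · exact h
  · exact JSet.mul_right h₁ hs u h
  · exact JSet.mul_left h₁ u h
  · exact JSet.mul_right h₁ hs w (JSet.mul_left h₁ u h)

lemma exists_rnf_of_mem_JSet {z : QGamma N} (hz : z ∈ JSet N t) :
    (∃ α β : List (PSym N), α ∈ RP N ∧ β ∈ RLP N ∧
        pathRng N α = N.r t ∧ pathRng N β = N.r t ∧ z = Qrnf N α β) ∨ z = Qzero N := by
  rcases hz with rfl | ⟨p, hp, A, L, hL, rfl⟩
  · exact Or.inr rfl
  rcases hp.exists_path with rfl | ⟨K, hK, hc, hr, rfl⟩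
  · exact Or.inr (zero_mul_Q _)
  · exact Or.inl ⟨K, L, mem_RP_of_isChain hK hc, hL.mem_RLP, hr, hL.pathRng_eq, rfl⟩

lemma rnf_mem_principalIdeal {α β : List (PSym N)} (hα : α ≠ []) (hβ : β ≠ [])
    (hrα : pathRng N α = N.r t) (hrβ : pathRng N β = N.r t) :
    Qrnf N α β ∈ principalIdeal (Qrnf N [pT t] [pT t]) := by
  -- `αβ⁻¹ = (αt⁻¹)(tt⁻¹)(tβ⁻¹)`
  refine Or.inr (Or.inr (Or.inr ⟨Qw α * G (.neg t), G (.pos t) * Qi β, ?_⟩))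
  have h : Qw α * G (.neg t) * (G (.pos t) * G (.neg t)) * (G (.pos t) * Qi β) =
      Qw α * (G (.neg t) * G (.pos t)) * ((G (.neg t) * G (.pos t)) * Qi β) := by
    simp only [mul_assoc]
  rw [show Qrnf N [pT t] [pT t] = G (.pos t) * G (.neg t) from rfl, h, neg_mul_pos,
    Qw_mul_rng (rV N t) α hα hrα, rng_mul_Qi (rV N t) β hβ hrβ, Qrnf_eq]

lemma zero_mem_principalIdeal (a : QGamma N) : Qzero N ∈ principalIdeal a :=
  Or.inr (Or.inl ⟨Qzero N, (mul_zero_Q a).symm⟩)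

lemma mul_mem_principalIdeal {S : Type*} [Semigroup S] {c a : S} (ha : a ∈ principalIdeal c)
    (q : S) : q * a ∈ principalIdeal c ∧ a * q ∈ principalIdeal c := by
  rcases ha with rfl | ⟨u, rfl⟩ | ⟨u, rfl⟩ | ⟨u, w, rfl⟩
  · exact ⟨Or.inr (Or.inr (Or.inl ⟨q, rfl⟩)), Or.inr (Or.inl ⟨q, rfl⟩)⟩
  · exact ⟨Or.inr (Or.inr (Or.inr ⟨q, u, by simp only [mul_assoc]⟩)),
      Or.inr (Or.inl ⟨u * q, by simp only [mul_assoc]⟩)⟩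
  · exact ⟨Or.inr (Or.inr (Or.inl ⟨q * u, by simp only [mul_assoc]⟩)),
      Or.inr (Or.inr (Or.inr ⟨u, q, by simp only [mul_assoc]⟩))⟩
  · exact ⟨Or.inr (Or.inr (Or.inr ⟨q * u, w, by simp only [mul_assoc]⟩)),
      Or.inr (Or.inr (Or.inr ⟨u, w * q, by simp only [mul_assoc]⟩))⟩

end Ideal

/-! ### A representation annihilating the ideal -/

section Representation

variable {N : Network V T}

open Classical in
/-- The action of generators on pairs (set of vertices, list of relations), with `none` as zero:
`q` prolongs a list starting at `r(q)`, `q⁻¹` removes a leading `q`, and `A` fixes the lists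
starting at `A`. Generators having `B` as source or range act as zero. -/
noncomputable def act (N : Network V T) (B : Set V) :
    Gen N → Option (Set V × List T) → Option (Set V × List T)
  | .pos q, some (A, L) =>
      if A = N.r q ∧ N.r q ≠ B ∧ N.s q ≠ B then some (N.s q, q :: L) else none
  | .neg q, some (A, q' :: L) =>
      if q' = q ∧ A = N.s q ∧ N.r q ≠ B ∧ N.s q ≠ B then some (N.r q, L) else none
  | .ver C, some (A, L) => if A = C.1 ∧ C.1 ≠ B then some (A, L) else none
  | _, _ => none

/-- The action extended to words. -/
noncomputable def rep (N : Network V T) (B : Set V) :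
    FreeSemigroup (Gen N) →ₙ* Function.End (Option (Set V × List T)) :=
  FreeSemigroup.lift (fun g => (act N B g : Function.End (Option (Set V × List T))))

lemma act_none (B : Set V) (g : Gen N) : act N B g none = none := by
  cases g <;> rfl

lemma act_zero (B : Set V) (x : Option (Set V × List T)) : act N B .zero x = none := by
  rcases x with _ | ⟨A, L⟩ <;> rfl

/-- Where a generator acts nontrivially, its argument starts at its range and the value starts at
its source. -/
lemma act_eq_some {B : Set V} {g : Gen N} {x : Option (Set V × List T)} {y : Set V × List T}
    (h : act N B g x = some y) :
    y.1 = g.srcSet ∧ g.srcSet ≠ B ∧ g.rngSet ≠ B ∧ ∃ L, x = some (g.rngSet, L) := by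
  rcases x with _ | ⟨A, L⟩
  · simp [act_none] at h
  cases g with
  | zero => simp [act] at h
  | pos q =>
    simp only [act, Option.ite_none_right_eq_some, Option.some.injEq] at h
    obtain ⟨⟨rfl, h1, h2⟩, rfl⟩ := h
    exact ⟨rfl, h2, h1, L, rfl⟩
  | ver C =>
    simp only [act, Option.ite_none_right_eq_some, Option.some.injEq] at h
    obtain ⟨⟨rfl, h1⟩, rfl⟩ := h
    exact ⟨rfl, h1, h1, L, rfl⟩
  | neg q =>
    cases L with
    | nil => simp [act] at h
    | cons q' L =>
      simp only [act, Option.ite_none_right_eq_some, Option.some.injEq] at h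
      obtain ⟨⟨rfl, rfl, h1, h2⟩, rfl⟩ := h
      exact ⟨rfl, h1, h2, _, rfl⟩

lemma act_ver_self {B : Set V} (C : N.T0) (hC : C.1 ≠ B) (L : List T) :
    act N B (.ver C) (some (C.1, L)) = some (C.1, L) := by
  simp [act, hC]

/-- A composite that is nonzero somewhere forces the range of the outer generator to equal the
source of the inner one. -/
lemma act_act_eq_none {B : Set V} {g g' : Gen N} (h : g.rngSet ≠ g'.srcSet)
    (x : Option (Set V × List T)) : act N B g (act N B g' x) = none := by
  by_contra hne
  obtain ⟨y, hy⟩ := Option.ne_none_iff_exists'.1 hne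
  obtain ⟨-, -, -, L, hL⟩ := act_eq_some hy
  exact h (act_eq_some hL).1

lemma rngSet_nonempty {g : Gen N} (hg : g ≠ .zero) : g.rngSet.Nonempty := by
  cases g with
  | zero => exact absurd rfl hg
  | pos q => exact N.r_nonempty q
  | neg q => exact N.s_nonempty q
  | ver A => exact T0_nonempty A

/-- The action respects (NR1)–(NR6). In (NR4), `q⁻¹q` is the identity over `r(q)` only if `q` is not
made zero when `r(q)` is not, which is why `B` must not be a source. -/
lemma rep_rel {B : Set V} (hB : ∀ q, N.s q ≠ B) {a b : FreeSemigroup (Gen N)}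
    (h : NRel N a b) : rep N B a = rep N B b := by
  funext x
  cases h with
  | nr1l g hg =>
    change act N B g.srcGen (act N B g x) = act N B g x
    rcases hgx : act N B g x with _ | ⟨A, L⟩
    · exact act_none _ _
    obtain ⟨rfl, h1, -⟩ := act_eq_some hgx
    cases g with
    | zero => exact absurd rfl hg
    | pos q => exact act_ver_self (sV N q) h1 L
    | neg q => exact act_ver_self (rV N q) h1 L
    | ver C => exact act_ver_self C h1 L
  | nr1r g hg =>
    change act N B g (act N B g.rngGen x) = act N B g x
    -- Both sides vanish away from `r(g)`, where `r(g)` acts as the identity.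
    by_cases hx : ∃ L, x = some (g.rngSet, L) ∧ g.rngSet ≠ B
    · obtain ⟨L, rfl, h1⟩ := hx
      congr 1
      cases g with
      | zero => exact absurd rfl hg
      | pos q => exact act_ver_self (rV N q) h1 L
      | neg q => exact act_ver_self (sV N q) h1 L
      | ver C => exact act_ver_self C h1 L
    · have e1 : act N B g x = none := by
        by_contra hne
        obtain ⟨y, hy⟩ := Option.ne_none_iff_exists'.1 hne
        obtain ⟨-, -, h1, L, hL⟩ := act_eq_some hy
        exact hx ⟨L, hL, h1⟩
      have e2 : act N B g.rngGen x = none := by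
        by_contra hne
        obtain ⟨y, hy⟩ := Option.ne_none_iff_exists'.1 hne
        obtain ⟨-, -, h1, L, hL⟩ := act_eq_some hy
        have e : g.rngGen.rngSet = g.rngSet := by cases g <;> rfl
        rw [e] at h1 hL
        exact hx ⟨L, hL, h1⟩
      rw [e1, e2, act_none]
  | nr2 g g' hg hg' h =>
    change act N B g (act N B g' x) = act N B .zero x
    rw [act_zero]
    refine act_act_eq_none (fun he => ?_) x
    rw [← he, Set.inter_self] at h
    exact (rngSet_nonempty hg).ne_empty h
  | nr3 q q' h =>
    change act N B (.neg q) (act N B (.pos q') x) = act N B .zero x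
    rw [act_zero]
    rcases x with _ | ⟨A, L⟩
    · rfl
    simp only [act]
    split_ifs
    · simp [h.symm]
    · rfl
  | nr4 q =>
    change act N B (.neg q) (act N B (.pos q) x) = act N B (.ver (rV N q)) x
    rcases x with _ | ⟨A, L⟩
    · rfl
    by_cases hA : A = N.r q ∧ N.r q ≠ B
    · simp [act, rV, hA.1, hA.2, hB q]
    · have hA' : ¬ (A = N.r q ∧ N.r q ≠ B ∧ N.s q ≠ B) := fun h => hA ⟨h.1, h.2.1⟩
      have e1 : act N B (.pos q) (some (A, L)) = none := if_neg hA'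
      have e2 : act N B (.ver (rV N q)) (some (A, L)) = none := if_neg hA
      rw [e1, e2, act_none]
  | nr5 q A h =>
    change act N B (.neg q) (act N B (.ver A) x) = act N B .zero x
    rw [act_zero]
    exact act_act_eq_none (g := .neg q) (g' := .ver A) (Ne.symm h) x
  | nr6l g =>
    change act N B .zero (act N B g x) = act N B .zero x
    rw [act_zero, act_zero]
  | nr6r g =>
    change act N B g (act N B .zero x) = act N B .zero x
    rw [act_zero, act_none]

lemma rep_eq_of_Qofw_eq {B : Set V} (hB : ∀ q, N.s q ≠ B) {a b : FreeSemigroup (Gen N)}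
    (h : Qofw a = Qofw b) : rep N B a = rep N B b := by
  have hle : QCon N ≤ Con.ker (rep N B) := Con.conGen_le.2 fun _ _ h => rep_rel hB h
  exact hle ((Con.eq _).1 h)

lemma rep_none (B : Set V) (w : FreeSemigroup (Gen N)) : rep N B w none = none := by
  induction w using FreeSemigroup.recOnMul with
  | ih1 g => exact act_none B g
  | ih2 g x _ hx =>
    rw [map_mul]
    change act N B g (rep N B x none) = none
    rw [hx, act_none]

/-- The vertex set `s(t)` is not in the ideal: it acts nontrivially, while `tt⁻¹` acts as zero. -/
lemma source_not_mem {t : T} (h₁ : ∀ q : T, N.s q ≠ N.r t) :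
    G (.ver (sV N t)) ∉ principalIdeal (Qrnf N [pT t] [pT t]) := by
  have htt (x) : rep N (N.r t) (word [pT t] * invWord [pT t]) x = none := by
    change act N (N.r t) (.pos t) (act N (N.r t) (.neg t) x) = none
    by_contra hne
    obtain ⟨y, hy⟩ := Option.ne_none_iff_exists'.1 hne
    exact (act_eq_some hy).2.2.1 rfl
  have hs : rep N (N.r t) (of (.ver (sV N t))) (some (N.s t, [])) = some (N.s t, []) :=
    act_ver_self (sV N t) (h₁ t) []
  -- Any word representing `s(t)` must act nontrivially at `(s(t), [])`.
  have key (w : FreeSemigroup (Gen N)) (hw : G (.ver (sV N t)) = Qofw w)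
      (h0 : ∀ x, rep N (N.r t) w x = none) : False := by
    rw [rep_eq_of_Qofw_eq h₁ hw, h0] at hs
    cases hs
  rintro (h | ⟨u, h⟩ | ⟨u, h⟩ | ⟨u, w, h⟩)
  · exact key _ h htt
  · induction u using Con.induction_on with
    | H u => exact key (_ * u) h fun x => by rw [map_mul]; exact htt _
  · induction u using Con.induction_on with
    | H u =>
      refine key (u * _) h fun x => ?_
      rw [map_mul]
      change rep N (N.r t) u (rep N (N.r t) (word [pT t] * invWord [pT t]) x) = none
      rw [htt, rep_none]
  · induction u using Con.induction_on with
    | H u =>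
      induction w using Con.induction_on with
      | H w =>
        refine key (u * (word [pT t] * invWord [pT t]) * w) h fun x => ?_
        rw [map_mul, map_mul]
        change rep N (N.r t) u (rep N (N.r t) (word [pT t] * invWord [pT t])
          (rep N (N.r t) w x)) = none
        rw [htt, rep_none]

end Representation

/-- if `t ∈ T` satisfies `o(r(t)) = 0` and there is no non-singleton `A ∈ T⁰`
with `r(t) ⊆ A`, then the principal ideal of `Q_Γ` generated by `[tt⁻¹]` equals
`{[αβ⁻¹] : α ∈ RP(Γ), β ∈ RLP(Γ), r(α) = r(β) = r(t)} ∪ {[0]}` and is a proper `*`-ideal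
of `Q_Γ` (an ideal closed under the relation `L*`). -/
theorem principal_ideal_star_ideal (N : Network V T) (t : T)
    (h₁ : ∀ q : T, N.s q ≠ N.r t)
    (h₂ : ∀ A : Set V, N.InT0 A → (¬ ∃ v : V, A = {v}) → ¬ N.r t ⊆ A) :
    principalIdeal (Qrnf N [Sum.inl t] [Sum.inl t]) =
      ({ q | ∃ α β : List (PSym N), α ∈ RP N ∧ β ∈ RLP N ∧
        pathRng N α = N.r t ∧ pathRng N β = N.r t ∧ q = Qrnf N α β } ∪ {Qzero N}) ∧
    (∀ a ∈ principalIdeal (Qrnf N [Sum.inl t] [Sum.inl t]), ∀ q : QGamma N,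
      q * a ∈ principalIdeal (Qrnf N [Sum.inl t] [Sum.inl t]) ∧
      a * q ∈ principalIdeal (Qrnf N [Sum.inl t] [Sum.inl t])) ∧
    principalIdeal (Qrnf N [Sum.inl t] [Sum.inl t]) ≠ Set.univ ∧
    (∀ a ∈ principalIdeal (Qrnf N [Sum.inl t] [Sum.inl t]), ∀ b : QGamma N,
      LStar a b → b ∈ principalIdeal (Qrnf N [Sum.inl t] [Sum.inl t])) := by
  have hs := isolated_of_maximal h₂
  have hJ := principalIdeal_subset_JSet h₁ hs
  refine ⟨Set.Subset.antisymm (fun z hz => exists_rnf_of_mem_JSet (hJ hz)) ?_,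
    fun a ha q => mul_mem_principalIdeal ha q, fun h => ?_, fun a ha b hab => ?_⟩
  · rintro z (⟨α, β, hα, hβ, hrα, hrβ, rfl⟩ | rfl)
    · exact rnf_mem_principalIdeal hα.1.1 hβ.1.1 hrα hrβ
    · exact zero_mem_principalIdeal _
  · exact source_not_mem h₁ (h ▸ Set.mem_univ _)
  · rcases exists_rnf_of_mem_JSet (hJ ha) with ⟨α, β, hα, hβ, hrα, hrβ, rfl⟩ | rfl
    · -- `a * ββ⁻¹ = a`, hence `b * ββ⁻¹ = b`.
      have hfix : Qrnf N α β * Qrnf N β β = Qrnf N α β := by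
        rw [Qrnf_eq, Qrnf_eq, mul_assoc, ← mul_assoc (Qi β),
          Qi_mul_Qw (rV N t) β hβ.1.1 hβ.2.1 hrβ, rng_mul_Qi (rV N t) β hβ.1.1 hrβ]
      have hb := (hab (Qrnf N β β : QGamma N) 1).1 (by rw [mul_one, ← WithOne.coe_mul, hfix])
      rw [mul_one, ← WithOne.coe_mul, WithOne.coe_inj] at hb
      rw [← hb]
      exact (mul_mem_principalIdeal (rnf_mem_principalIdeal hβ.1.1 hβ.1.1 hrβ hrβ) b).1
    · -- `0 * 0 = 0 * 1`, hence `b * 0 = b`.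
      have hb := (hab (Qzero N : QGamma N) 1).1
        (by rw [mul_one, ← WithOne.coe_mul, mul_zero_Q])
      rw [mul_one, ← WithOne.coe_mul, WithOne.coe_inj, mul_zero_Q] at hb
      rw [← hb]
      exact zero_mem_principalIdeal _

end NetworkSemigroup
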